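/- arXiv:2111.02277 — 3 statements merged into one kernel-verified Lean document; each statement's English description precedes it below -/
import Mathlib

section
/- Let Φ be a hereditary graph property. Then the following are equivalent: (i) Φ is not meagre; (ii) there are graphs of arbitrarily large order on which Φ is 1, and there is at least one graph on which Φ is 0; (iii) Φ is not identically 1, and there are no positive integers s, t with Φ(K_s) = 0 and Φ(I_t) = 0, where K_s is the complete graph on s vertices and I_t is the edgeless graph on t vertices. -/
theorem ramsey_aux (k : ℕ) : ∀ s t : ℕ, s + t = k → ∃ R : ℕ, ∀ (n : ℕ) (G : SimpleGraph (Fin n))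
    (A : Finset (Fin n)), R ≤ A.card →
      (∃ S ⊆ A, S.card = s ∧ ∀ x ∈ S, ∀ y ∈ S, x ≠ y → G.Adj x y) ∨
      (∃ S ⊆ A, S.card = t ∧ ∀ x ∈ S, ∀ y ∈ S, x ≠ y → ¬ G.Adj x y) := by
  classical
  induction k with
  | zero =>
    intro s t h
    refine ⟨0, fun n G A _ => Or.inl ⟨∅, by simp, ?_, by simp⟩⟩
    simp; omega
  | succ k ih =>
    intro s t h
    rcases s with _ | s
    · exact ⟨0, fun n G A _ => Or.inl ⟨∅, by simp, by simp, by simp⟩⟩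
    rcases t with _ | t
    · exact ⟨0, fun n G A _ => Or.inr ⟨∅, by simp, by simp, by simp⟩⟩
    obtain ⟨R₁, h₁⟩ := ih s (t+1) (by omega)
    obtain ⟨R₂, h₂⟩ := ih (s+1) t (by omega)
    refine ⟨R₁ + R₂ + 1, fun n G A hA => ?_⟩
    obtain ⟨v, hv⟩ : A.Nonempty := by
      rw [← Finset.card_pos]; omega
    have hc := Finset.card_filter_add_card_filter_not (s := A.erase v) (fun w => G.Adj v w)
    rw [Finset.card_erase_of_mem hv] at hc
    by_cases hR : R₁ ≤ ((A.erase v).filter (fun w => G.Adj v w)).card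
    · rcases h₁ n G _ hR with ⟨S, hS, hcard, hadj⟩ | ⟨S, hS, hcard, hadj⟩
      · left
        have hS' : ∀ x ∈ S, (x ≠ v ∧ x ∈ A) ∧ G.Adj v x := fun x hx => by
          simpa using hS hx
        refine ⟨insert v S, ?_, ?_, ?_⟩
        · intro x hx
          rcases Finset.mem_insert.1 hx with rfl | hx
          · exact hv
          · exact (hS' x hx).1.2
        · rw [Finset.card_insert_of_notMem, hcard]
          exact fun hx => (hS' v hx).1.1 rfl
        · intro x hx y hy hxy
          rcases Finset.mem_insert.1 hx with rfl | hx1 <;>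
            rcases Finset.mem_insert.1 hy with rfl | hy1
          · exact absurd rfl hxy
          · exact (hS' y hy1).2
          · exact (hS' x hx1).2.symm
          · exact hadj x hx1 y hy1 hxy
      · right
        exact ⟨S, fun x hx => Finset.mem_of_mem_erase (Finset.mem_filter.1 (hS hx)).1, hcard, hadj⟩
    · have hR2 : R₂ ≤ ((A.erase v).filter (fun w => ¬ G.Adj v w)).card := by omega
      rcases h₂ n G _ hR2 with ⟨S, hS, hcard, hadj⟩ | ⟨S, hS, hcard, hadj⟩
      · left
        exact ⟨S, fun x hx => Finset.mem_of_mem_erase (Finset.mem_filter.1 (hS hx)).1, hcard, hadj⟩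
      · right
        have hS' : ∀ x ∈ S, (x ≠ v ∧ x ∈ A) ∧ ¬ G.Adj v x := fun x hx => by
          simpa using hS hx
        refine ⟨insert v S, ?_, ?_, ?_⟩
        · intro x hx
          rcases Finset.mem_insert.1 hx with rfl | hx
          · exact hv
          · exact (hS' x hx).1.2
        · rw [Finset.card_insert_of_notMem, hcard]
          exact fun hx => (hS' v hx).1.1 rfl
        · intro x hx y hy hxy
          rcases Finset.mem_insert.1 hx with rfl | hx1 <;>
            rcases Finset.mem_insert.1 hy with rfl | hy1
          · exact absurd rfl hxy
          · exact (hS' y hy1).2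
          · exact fun h => (hS' x hx1).2 h.symm
          · exact hadj x hx1 y hy1 hxy

/-- Let `Φ` be a hereditary graph property (a Boolean function on finite simple
graphs, invariant under isomorphism and closed under taking induced subgraphs).
Then the following are equivalent:
(i)   `Φ` is not meagre (i.e. it fails to be `k`-trivial for infinitely many `k`);
(ii)  there are graphs of arbitrarily large order on which `Φ` is `1`, and there is
      at least one graph on which `Φ` is `0`;
(iii) `Φ` is not identically `1`, and there are no positive integers `s, t` with
      `Φ(K_s) = 0` and `Φ(I_t) = 0`. -/
theorem stmt_1 (Φ : ∀ n : ℕ, SimpleGraph (Fin n) → Bool)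
    (hiso : ∀ (n : ℕ) (G₁ G₂ : SimpleGraph (Fin n)), Nonempty (G₁ ≃g G₂) → Φ n G₁ = Φ n G₂)
    (hher : ∀ (n m : ℕ) (f : Fin m ↪ Fin n) (G : SimpleGraph (Fin n)),
      Φ n G = true → Φ m (G.comap f) = true) :
    List.TFAE [
      -- (i) Φ is not meagre
      ¬ ({k : ℕ | ∃ G₁ G₂ : SimpleGraph (Fin k), Φ k G₁ ≠ Φ k G₂}.Finite),
      -- (ii) Φ is 1 on graphs of arbitrarily large order, and 0 on some graph
      (∀ N : ℕ, ∃ n : ℕ, N ≤ n ∧ ∃ G : SimpleGraph (Fin n), Φ n G = true) ∧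
        (∃ (n : ℕ) (G : SimpleGraph (Fin n)), Φ n G = false),
      -- (iii) Φ is not identically 1, and never kills both a clique and an
      -- independent set
      (¬ ∀ (n : ℕ) (G : SimpleGraph (Fin n)), Φ n G = true) ∧
        ¬ ∃ s t : ℕ, 0 < s ∧ 0 < t ∧
          Φ s (⊤ : SimpleGraph (Fin s)) = false ∧ Φ t (⊥ : SimpleGraph (Fin t)) = false
    ] := by
  tfae_have 3 → 2 := by
    rintro ⟨h1, h2⟩
    refine ⟨fun N => ?_, by simpa using h1⟩
    refine ⟨N + 1, by omega, ?_⟩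
    by_contra hcon
    push Not at hcon
    exact h2 ⟨N + 1, N + 1, by omega, by omega, by simpa using hcon ⊤, by simpa using hcon ⊥⟩
  tfae_have 2 → 1 := by
    rintro ⟨h1, n₀, G₀, hG₀⟩
    refine Set.infinite_of_forall_exists_gt fun N => ?_
    obtain ⟨n, hn, G, hG⟩ := h1 (N + 1 + n₀)
    refine ⟨n, ⟨G, G₀.map (Fin.castLEEmb (by omega : n₀ ≤ n)), ?_⟩, by omega⟩
    intro heq
    rw [hG] at heq
    have := hher n n₀ (Fin.castLEEmb (by omega : n₀ ≤ n)) _ heq.symm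
    rw [SimpleGraph.comap_map_eq, hG₀] at this
    exact absurd this (by simp)
  tfae_have 1 → 3 := by
    intro h
    refine ⟨fun hall => h ?_, ?_⟩
    · simp [hall]
    · rintro ⟨s, t, _, _, hs, ht⟩
      obtain ⟨R, hR⟩ := ramsey_aux (s + t) s t rfl
      apply h
      refine (Set.finite_lt_nat R).subset ?_
      rintro k ⟨G₁, G₂, hne⟩
      by_contra hk
      have hk : R ≤ k := by simpa using hk
      have key : ∀ G : SimpleGraph (Fin k), Φ k G = false := by
        intro G
        by_contra hG
        have hG : Φ k G = true := by simpa using hG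
        rcases hR k G Finset.univ (by simpa using hk) with ⟨S, -, hc, ha⟩ | ⟨S, -, hc, ha⟩
        · have h3 := hher k s (S.orderEmbOfFin hc).toEmbedding G hG
          have : G.comap (S.orderEmbOfFin hc).toEmbedding = ⊤ := by
            ext x y
            simp only [SimpleGraph.comap_adj, SimpleGraph.top_adj]
            refine ⟨fun h e => h.ne (by rw [e]), fun h => ha _ ?_ _ ?_ ?_⟩
            · exact S.orderEmbOfFin_mem hc x
            · exact S.orderEmbOfFin_mem hc y
            · exact fun e => h ((S.orderEmbOfFin hc).injective e)
          rw [this, hs] at h3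
          exact absurd h3 (by simp)
        · have h3 := hher k t (S.orderEmbOfFin hc).toEmbedding G hG
          have : G.comap (S.orderEmbOfFin hc).toEmbedding = ⊥ := by
            ext x y
            simp only [SimpleGraph.comap_adj, SimpleGraph.bot_adj, iff_false]
            intro h
            exact ha _ (S.orderEmbOfFin_mem hc x) _ (S.orderEmbOfFin_mem hc y) h.ne h
          rw [this, ht] at h3
          exact absurd h3 (by simp)
      exact hne (by rw [key, key])
  tfae_finish
end

section
/- Let k be a prime and let Ψ be a {0,1}-valued function on the subsets of [k] × [k] that is invariant under the coordinatewise action of pairs of permutations, i.e., Ψ(A) = Ψ({(σ(u), τ(v)) : (u,v) ∈ A}) for all permutations σ, τ of [k] and all A ⊆ [k] × [k]. (Equivalently, Ψ is a bipartite property evaluated on the edge-subgraphs 𝐁_{k,k}[A] of the biclique 𝐁_{k,k}.) If Ψ([k] × [k]) ≠ Ψ(∅) — i.e., Ψ distinguishes the complete bipartite graph 𝐁_{k,k} from the edgeless bipartite graph 𝐈_{k,k} — then the integer Σ_{A ⊆ [k] × [k]} Ψ(A) · (−1)^{k² − |A|} is non-zero. -/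
/-- The inclusion of permutations into endofunctions. -/
def auxHom (α : Type*) : Equiv.Perm α →* Function.End α where
  toFun g := (g : α → α)
  map_one' := rfl
  map_mul' _ _ := rfl

open Fin.CommRing in
theorem aux_shift (k : ℕ) [NeZero k] : ∃ s : Equiv.Perm (Fin k), s ^ k = 1 ∧
    ∀ a b, ∃ n : ℕ, (s ^ n) a = b := by
  let s : Equiv.Perm (Fin k) := Equiv.addRight 1
  have hspow : ∀ n : ℕ, ∀ x, (s ^ n) x = x + (n : Fin k) := by
    intro n x
    induction n with
    | zero => simp
    | succ n ih => rw [pow_succ', Equiv.Perm.mul_apply, ih]; simp [s, add_assoc]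
  refine ⟨s, ?_, fun a b => ⟨(b - a).val, ?_⟩⟩
  · ext x : 1
    rw [hspow]; simp
  · rw [hspow]; simp

theorem aux_fix {α : Type*} [Finite α] (p : ℕ) [Fact p.Prime]
    (h : Equiv.Perm α) (hh : h ^ p = 1) :
    (Nat.card α : ZMod p) = (Nat.card {a // h a = a} : ZMod p) := by
  classical
  have : Fintype α := Fintype.ofFinite α
  have hh2 : (auxHom _ h) ^ p ^ 1 = 1 := by
    rw [← map_pow, pow_one, hh, map_one]
  have : Fintype (Function.fixedPoints (auxHom _ h)) := Fintype.ofFinite _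
  have hmod : Fintype.card α ≡ Fintype.card (Function.fixedPoints (auxHom _ h)) [MOD p] := by
    convert Equiv.Perm.card_fixedPoints_modEq hh2
  rw [← ZMod.natCast_eq_natCast_iff, ← Nat.card_eq_fintype_card,
    ← Nat.card_eq_fintype_card] at hmod
  exact hmod

theorem aux_sum {α : Type*} [Fintype α] [DecidableEq α] (p : ℕ) [Fact p.Prime]
    (g : Equiv.Perm α) (hg : g ^ p = 1) (f : α → ZMod p) (hf : ∀ a, f (g a) = f a) :
    ∑ a, f a = ∑ a, if g a = a then f a else 0 := by
  classical
  have key : ∀ c : ZMod p, ((Finset.univ.filter (fun a => f a = c)).card : ZMod p) =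
      ((Finset.univ.filter (fun a => f a = c ∧ g a = a)).card : ZMod p) := by
    intro c
    let h : Equiv.Perm {a // f a = c} := g.subtypePerm (fun a => by rw [hf])
    have hh : h ^ p = 1 := by
      ext a
      simp [h, Equiv.Perm.subtypePerm_pow, hg]
    rw [← Fintype.card_subtype, ← Fintype.card_subtype, ← Nat.card_eq_fintype_card,
      ← Nat.card_eq_fintype_card, aux_fix p h hh]
    congr 1
    refine Nat.card_congr ?_
    refine ⟨fun x => ⟨x.1.1, x.1.2, ?_⟩, fun x => ⟨⟨x.1, x.2.1⟩, ?_⟩, fun x => rfl, fun x => rfl⟩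
    · exact congrArg Subtype.val x.2
    · exact Subtype.ext x.2.2
  rw [← Finset.sum_filter]
  rw [← Finset.sum_fiberwise Finset.univ f f,
    ← Finset.sum_fiberwise (Finset.univ.filter (fun a => g a = a)) f f]
  refine Finset.sum_congr rfl fun c _ => ?_
  rw [Finset.sum_congr rfl (g := fun _ => c) (fun x hx => (Finset.mem_filter.1 hx).2),
    Finset.sum_congr rfl (s₁ := Finset.filter _ (Finset.filter _ _)) (g := fun _ => c)
      (fun x hx => (Finset.mem_filter.1 hx).2)]
  rw [Finset.sum_const, Finset.sum_const, nsmul_eq_mul, nsmul_eq_mul, key c,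
    Finset.filter_filter]
  simp only [and_comm]

theorem aux_congr_pow {β : Type*} (e : Equiv.Perm β) (n : ℕ) :
    (e.finsetCongr : Equiv.Perm (Finset β)) ^ n = Equiv.finsetCongr (e ^ n) := by
  induction n with
  | zero => rw [pow_zero, pow_zero]; exact Equiv.finsetCongr_refl.symm
  | succ n ih => rw [pow_succ, ih, pow_succ]; exact Equiv.finsetCongr_trans _ _

/-- Let `k` be a prime and let `Ψ` be a `{0,1}`-valued function on the subsets of
`[k] × [k]` that is invariant under the coordinatewise action of pairs of
permutations. If `Ψ` distinguishes the complete bipartite graph `𝐁_{k,k}` (the full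
set) from the edgeless bipartite graph `𝐈_{k,k}` (the empty set), then the integer
`Σ_{A ⊆ [k] × [k]} Ψ(A) · (−1)^{k² − |A|}` is non-zero. -/
theorem stmt_5 (k : ℕ) (hk : k.Prime) (Ψ : Finset (Fin k × Fin k) → Bool)
    (hΨ : ∀ (σ τ : Equiv.Perm (Fin k)) (A : Finset (Fin k × Fin k)),
      Ψ A = Ψ (A.image (fun p => (σ p.1, τ p.2))))
    (hne : Ψ (Finset.univ : Finset (Fin k × Fin k)) ≠ Ψ (∅ : Finset (Fin k × Fin k))) :
    (∑ A ∈ (Finset.univ : Finset (Fin k × Fin k)).powerset,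
        (if Ψ A then (1 : ℤ) else 0) * (-1 : ℤ) ^ (k ^ 2 - A.card)) ≠ 0 := by
  classical
  have : Fact k.Prime := ⟨hk⟩
  have : NeZero k := ⟨hk.ne_zero⟩
  intro h0
  have h1 := congrArg (Int.cast : ℤ → ZMod k) h0
  rw [Finset.powerset_univ, Int.cast_sum, Int.cast_zero] at h1
  obtain ⟨s, hs, htrans⟩ := aux_shift k
  let e1 : Equiv.Perm (Fin k × Fin k) := Equiv.prodCongr s (Equiv.refl _)
  let e2 : Equiv.Perm (Fin k × Fin k) := Equiv.prodCongr (Equiv.refl _) s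
  have he1p : ∀ n : ℕ, ∀ x, (e1 ^ n) x = ((s ^ n) x.1, x.2) := by
    intro n x
    induction n with
    | zero => simp
    | succ n ih => rw [pow_succ', Equiv.Perm.mul_apply, ih, pow_succ']; rfl
  have he2p : ∀ n : ℕ, ∀ x, (e2 ^ n) x = (x.1, (s ^ n) x.2) := by
    intro n x
    induction n with
    | zero => simp
    | succ n ih => rw [pow_succ', Equiv.Perm.mul_apply, ih, pow_succ']; rfl
  have he1 : e1 ^ k = 1 := by ext x : 1; rw [he1p, hs]; rfl
  have he2 : e2 ^ k = 1 := by ext x : 1; rw [he2p, hs]; rfl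
  let g1 : Equiv.Perm (Finset (Fin k × Fin k)) := e1.finsetCongr
  let g2 : Equiv.Perm (Finset (Fin k × Fin k)) := e2.finsetCongr
  have hg1 : g1 ^ k = 1 := by
    rw [aux_congr_pow, he1]; exact Equiv.finsetCongr_refl
  have hg2 : g2 ^ k = 1 := by
    rw [aux_congr_pow, he2]; exact Equiv.finsetCongr_refl
  have hcomm : ∀ A, g1 (g2 A) = g2 (g1 A) := by
    intro A
    simp only [g1, g2, Equiv.finsetCongr_apply, Finset.map_map]
    rfl
  have hΨ1 : ∀ A, Ψ (g1 A) = Ψ A := by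
    intro A
    rw [hΨ s (Equiv.refl _) A]
    simp only [g1, Equiv.finsetCongr_apply, Finset.map_eq_image]
    rfl
  have hΨ2 : ∀ A, Ψ (g2 A) = Ψ A := by
    intro A
    rw [hΨ (Equiv.refl _) s A]
    simp only [g2, Equiv.finsetCongr_apply, Finset.map_eq_image]
    rfl
  have hc1 : ∀ A, (g1 A).card = A.card := fun A => by simp [g1]
  have hc2 : ∀ A, (g2 A).card = A.card := fun A => by simp [g2]
  rw [aux_sum k g1 hg1 _ (fun A => by rw [hΨ1, hc1]),
    aux_sum k g2 hg2 _ (fun A => by simp only [hΨ2, hc2, hcomm, g2.injective.eq_iff])] at h1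
  have hfix : ∀ A, g2 A = A → g1 A = A → A = ∅ ∨ A = Finset.univ := by
    intro A h2 h1
    rcases A.eq_empty_or_nonempty with h | ⟨⟨u, v⟩, huv⟩
    · exact Or.inl h
    right
    have m1 : ∀ n : ℕ, ∀ x ∈ A, (e1 ^ n) x ∈ A := by
      intro n x hx
      induction n with
      | zero => simpa
      | succ n ih =>
        rw [pow_succ', Equiv.Perm.mul_apply, ← h1]
        exact Finset.mem_map_of_mem _ ih
    have m2 : ∀ n : ℕ, ∀ x ∈ A, (e2 ^ n) x ∈ A := by
      intro n x hx
      induction n with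
      | zero => simpa
      | succ n ih =>
        rw [pow_succ', Equiv.Perm.mul_apply, ← h2]
        exact Finset.mem_map_of_mem _ ih
    rw [Finset.eq_univ_iff_forall]
    rintro ⟨a, b⟩
    obtain ⟨n, hn⟩ := htrans u a
    obtain ⟨m, hm⟩ := htrans v b
    have := m2 m _ (m1 n _ huv)
    rw [he2p, he1p] at this
    simpa [hn, hm] using this
  have hem1 : g1 ∅ = ∅ := by simp [g1]
  have hem2 : g2 ∅ = ∅ := by simp [g2]
  have hun1 : g1 Finset.univ = Finset.univ := by simp [g1]
  have hun2 : g2 Finset.univ = Finset.univ := by simp [g2]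
  have hneu : (∅ : Finset (Fin k × Fin k)) ≠ Finset.univ :=
    fun h => hne (by rw [h])
  rw [← Finset.sum_subset (Finset.subset_univ {∅, Finset.univ}), Finset.sum_pair hneu,
    hem1, hem2, hun1, hun2] at h1
  · simp only [if_true] at h1
    have hcard : (Finset.univ : Finset (Fin k × Fin k)).card = k ^ 2 := by
      simp [sq]
    rw [hcard] at h1
    cases hu : Ψ Finset.univ <;> cases he : Ψ ∅ <;> simp_all
  · intro A _ hA
    by_cases a2 : g2 A = A
    · by_cases a1 : g1 A = A
      · exact absurd (by simpa using hfix A a2 a1) hA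
      · simp [a1]
    · simp [a2]
end

section
/- Let k be a prime and let f be an integer-valued function on the subsets of [k] × [k] that is invariant under the coordinatewise action of pairs of permutations, i.e., f(A) = f({(σ(u), τ(v)) : (u,v) ∈ A}) for all permutations σ, τ of [k] and all A ⊆ [k] × [k]. Then Σ_{A ⊆ [k] × [k]} f(A) · (−1)^{|A|} ≡ f(∅) + (−1)^{k²} · f([k] × [k]) (mod k). -/
open scoped Pointwise in
/-- Let `k` be a prime and let `f` be an integer-valued function on the subsets of
`[k] × [k]` that is invariant under the coordinatewise action of pairs of
permutations. Then
`Σ_{A ⊆ [k] × [k]} f(A) · (−1)^{|A|} ≡ f(∅) + (−1)^{k²} · f([k] × [k]) (mod k)`. -/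
theorem stmt_6 (k : ℕ) (hk : k.Prime) (f : Finset (Fin k × Fin k) → ℤ)
    (hf : ∀ (σ τ : Equiv.Perm (Fin k)) (A : Finset (Fin k × Fin k)),
      f A = f (A.image (fun p => (σ p.1, τ p.2)))) :
    Int.ModEq (k : ℤ)
      (∑ A ∈ (Finset.univ : Finset (Fin k × Fin k)).powerset, f A * (-1 : ℤ) ^ A.card)
      (f ∅ + (-1 : ℤ) ^ (k ^ 2) * f Finset.univ) := by
  classical
  haveI : Fact k.Prime := ⟨hk⟩
  haveI : NeZero k := ⟨hk.ne_zero⟩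
  let G := Multiplicative (Fin k × Fin k)
  have hG : IsPGroup k G := by
    apply IsPGroup.of_card (n := 2)
    simp [G, Nat.card_eq_fintype_card, Fintype.card_multiplicative, pow_two]
  have hinv : ∀ (g : G) (A : Finset (Fin k × Fin k)),
      f (g • A) * (-1 : ℤ) ^ (g • A).card = f A * (-1 : ℤ) ^ A.card := by
    intro g A
    rw [Finset.card_smul_finset]
    congr 1
    exact (hf (Equiv.addLeft g.toAdd.1) (Equiv.addLeft g.toAdd.2) A).symm
  have hfix : ∀ A : Finset (Fin k × Fin k), (∀ g : G, g • A = A) → A ≠ ∅ → A = Finset.univ := by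
    intro A hA hne
    obtain ⟨a, ha⟩ := Finset.nonempty_iff_ne_empty.mpr hne
    ext b
    simp only [Finset.mem_univ, iff_true]
    rw [← hA (Multiplicative.ofAdd (b - a))]
    refine Finset.mem_smul_finset.mpr ⟨a, ha, ?_⟩
    change (b - a) + a = b
    exact sub_add_cancel b a
  have hne : (∅ : Finset (Fin k × Fin k)) ≠ Finset.univ :=
    (Finset.univ_nonempty.ne_empty).symm
  rw [← ZMod.intCast_eq_intCast_iff, Finset.powerset_univ,
    ← Finset.sum_sdiff (Finset.subset_univ {∅, Finset.univ}), Finset.sum_pair hne]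
  have key : ∑ A ∈ Finset.univ \ {∅, (Finset.univ : Finset (Fin k × Fin k))},
      ((f A * (-1 : ℤ) ^ A.card : ℤ) : ZMod k) = 0 := by
    apply Finset.sum_cancels_of_partition_cancels
      (MulAction.orbitRel G (Finset (Fin k × Fin k)))
    intro A hA
    simp only [Finset.mem_sdiff, Finset.mem_univ, true_and, Finset.mem_insert,
      Finset.mem_singleton, not_or] at hA
    have hset : (Finset.univ \ {∅, (Finset.univ : Finset (Fin k × Fin k))}).filter
        (fun B => (MulAction.orbitRel G (Finset (Fin k × Fin k))) B A)
        = (MulAction.orbit G A).toFinset := by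
      ext B
      simp only [Finset.mem_filter, Finset.mem_sdiff, Finset.mem_univ, true_and,
        Finset.mem_insert, Finset.mem_singleton, not_or, Set.mem_toFinset,
        MulAction.orbitRel_apply, and_iff_right_iff_imp]
      rintro ⟨g, rfl⟩
      refine ⟨fun h => hA.1 ?_, fun h => hA.2 ?_⟩
      · simpa using h
      · have h' : g • A = Finset.univ := h
        rw [← inv_smul_smul g A, h', Finset.smul_finset_univ]
    rw [hset, Finset.sum_congr rfl (g := fun _ => ((f A * (-1 : ℤ) ^ A.card : ℤ) : ZMod k))]
    · rw [Finset.sum_const, Set.toFinset_card, nsmul_eq_mul]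
      obtain ⟨n, hn⟩ := hG.card_orbit A
      rw [Nat.card_eq_fintype_card] at hn
      rcases Nat.eq_zero_or_pos n with h0 | h0
      · exfalso
        subst h0
        rw [pow_zero, Fintype.card_eq_one_iff] at hn
        obtain ⟨x, hx⟩ := hn
        apply hA.2
        apply hfix A _ hA.1
        intro g
        have h1 := hx ⟨g • A, MulAction.mem_orbit A g⟩
        have h2 := hx ⟨A, MulAction.mem_orbit_self A⟩
        exact congrArg Subtype.val (h1.trans h2.symm)
      · rw [hn, Nat.cast_pow, ZMod.natCast_self, zero_pow h0.ne', zero_mul]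
    · intro B hB
      rw [Set.mem_toFinset] at hB
      obtain ⟨g, rfl⟩ := hB
      exact congrArg _ (hinv g A)
  rw [Int.cast_add, Int.cast_sum, key, zero_add]
  simp [pow_two, mul_comm]
end
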